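/- Let μ be the coding of {a, b, c, d} given by μ(a) = d, μ(b) = c, μ(c) = b, μ(d) = a, extended letterwise to finite words. Then for every n ≥ 1 and every word W over {a, b, c, d} of length n: (1) W is a factor of s if and only if μ(W) is a factor of s; (2) if W is a factor of s, then S(W) = M_r(n) if and only if S(μ(W)) = m_r(n). -/

import Mathlib

/-- The alphabet `{a, b, c, d}`. -/
inductive Letter : Type
  | a | b | c | d
deriving DecidableEq

open Letter

/-- The substitution `σ : a ↦ ab, b ↦ ac, c ↦ db, d ↦ dc`. -/
def sub : Letter → List Letter
  | a => [a, b]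
  | b => [a, c]
  | c => [d, b]
  | d => [d, c]

/-- The substitution `σ` extended to finite words by concatenation. -/
def subw (w : List Letter) : List Letter := (w.map sub).flatten

/-- The coding `τ : a, b ↦ 1, c, d ↦ −1`. -/
def τ : Letter → ℤ
  | a => 1
  | b => 1
  | c => -1
  | d => -1

/-- `S(u)`: the sum of `τ` over the letters of `u`. -/
def S (u : List Letter) : ℤ := (u.map τ).sum

/-- The coding `μ : a ↦ d, b ↦ c, c ↦ b, d ↦ a`. -/
def μ : Letter → Letter
  | a => d
  | b => c
  | c => b
  | d => a

/-- The fixed point `s = σ^∞(a)` of the substitution `σ` beginning with `a`: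
its `n`-th letter is the `n`-th letter of `σ^(n+1)(a)` (which has length
`2^(n+1) > n`, and each `σ^k(a)` is a prefix of `σ^(k+1)(a)`). -/
def fp (n : ℕ) : Letter := (subw^[n + 1] [a]).getD n a

/-- The Rudin–Shapiro sequence `r = τ(s)`. -/
def rs (n : ℕ) : ℤ := τ (fp n)

/-- `W` is a factor of the infinite word `s` (occurs as a block of
consecutive letters). -/
def FactorOf (W : List Letter) : Prop :=
  ∃ i, W = (List.range W.length).map fun j => fp (i + j)

/-!
Since `μ` commutes with `σ` and `d = μ(a)`, the word `μ(σᵏ(a))` equals `σᵏ(d)`, which is a factor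
of `s` because `d` occurs in `σ³(a)`. Every factor of `s` lies in some `σᵏ(a)`, so the set of
factors is closed under the involution `μ`. As `τ ∘ μ = -τ`, the sums of `r` over windows of a
given length form a set symmetric about `0`, whence `m_r(n) = -M_r(n)`.
-/

theorem subw_append (u v : List Letter) : subw (u ++ v) = subw u ++ subw v := by
  simp only [subw, List.map_append, List.flatten_append]

theorem iterate_subw_append (k : ℕ) (u v : List Letter) :
    subw^[k] (u ++ v) = subw^[k] u ++ subw^[k] v := by
  induction k with
  | zero => rfl
  | succ k ih => simp only [Function.iterate_succ_apply', ih, subw_append]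

theorem isInfix_iterate_subw {u v : List Letter} (h : u <:+: v) (k : ℕ) :
    subw^[k] u <:+: subw^[k] v := by
  obtain ⟨s, t, rfl⟩ := h
  simpa only [iterate_subw_append] using List.infix_append ..

theorem iterate_subw_a_isPrefix {k l : ℕ} (hkl : k ≤ l) : subw^[k] [a] <+: subw^[l] [a] := by
  refine Nat.rel_of_forall_rel_succ_of_le (· <+: ·) (f := fun k => subw^[k] [a]) (fun k => ?_) hkl
  calc subw^[k] [a] <+: subw^[k] [a] ++ subw^[k] [b] := List.prefix_append ..
    _ = subw^[k + 1] [a] := (iterate_subw_append k [a] [b]).symm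

theorem length_subw (w : List Letter) : (subw w).length = 2 * w.length := by
  have length_sub (x : Letter) : (sub x).length = 2 := by cases x <;> rfl
  simp [subw, length_sub, mul_comm, Function.comp_def]

theorem length_iterate_subw (k : ℕ) (w : List Letter) :
    (subw^[k] w).length = 2 ^ k * w.length := by
  induction k with
  | zero => simp
  | succ k ih => rw [Function.iterate_succ_apply', length_subw, ih, pow_succ', mul_assoc]

theorem lt_length_iterate_subw_a (k : ℕ) : k < (subw^[k] [a]).length := by
  simpa [length_iterate_subw] using Nat.lt_two_pow_self

theorem getElem_iterate_subw_a {k n : ℕ} (h : n < (subw^[k] [a]).length) :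
    (subw^[k] [a])[n] = fp n := by
  have h' : n < (subw^[n + 1] [a]).length := n.lt_succ_self.trans (lt_length_iterate_subw_a _)
  rw [fp, List.getD_eq_getElem _ _ h']
  rcases le_total k (n + 1) with hk | hk
  · exact (iterate_subw_a_isPrefix hk).getElem h
  · exact ((iterate_subw_a_isPrefix hk).getElem h').symm

theorem factorOf_iff_exists_isInfix {W : List Letter} :
    FactorOf W ↔ ∃ k, W <:+: subw^[k] [a] := by
  constructor
  · rintro ⟨i, hi⟩
    have hlen := lt_length_iterate_subw_a (i + W.length)
    refine ⟨i + W.length, List.infix_iff_getElem?.2 ⟨i, by lia, fun j hj => ?_⟩⟩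
    have hWj : W[j] = fp (i + j) := by simp [List.getElem_of_eq hi hj]
    rw [List.getElem?_eq_getElem (by lia), getElem_iterate_subw_a, hWj, add_comm]
  · rintro ⟨k, hk⟩
    obtain ⟨i, hlen, hi⟩ := List.infix_iff_getElem?.1 hk
    refine ⟨i, List.ext_getElem (by simp) fun j hj _ => ?_⟩
    have hWj := hi j hj
    rw [List.getElem?_eq_getElem (by lia), getElem_iterate_subw_a, Option.some_inj] at hWj
    simp [← hWj, add_comm]

theorem μ_involutive : Function.Involutive μ := fun x => by cases x <;> rfl

theorem commute_map_μ_subw : Function.Commute (List.map μ) subw := fun w => by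
  have sub_μ (x : Letter) : sub (μ x) = (sub x).map μ := by cases x <;> rfl
  simp [subw, sub_μ, List.map_flatten, Function.comp_def]

theorem FactorOf.map_μ {W : List Letter} (h : FactorOf W) : FactorOf (W.map μ) := by
  obtain ⟨k, hk⟩ := factorOf_iff_exists_isInfix.1 h
  have d_isInfix : [d] <:+: subw^[3] [a] := ⟨[a, b, a, c, a, b], [b], rfl⟩
  refine factorOf_iff_exists_isInfix.2 ⟨k + 3, ?_⟩
  calc W.map μ <:+: (subw^[k] [a]).map μ := hk.map μ
    _ = subw^[k] [d] := commute_map_μ_subw.iterate_right k [a]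
    _ <:+: subw^[k] (subw^[3] [a]) := isInfix_iterate_subw d_isInfix k
    _ = subw^[k + 3] [a] := (Function.iterate_add_apply ..).symm

theorem factorOf_map_μ_iff {W : List Letter} : FactorOf (W.map μ) ↔ FactorOf W :=
  ⟨fun h => by simpa [μ_involutive.comp_self] using h.map_μ, FactorOf.map_μ⟩

theorem S_map_μ (W : List Letter) : S (W.map μ) = -S W := by
  have τ_μ (x : Letter) : τ (μ x) = -τ x := by cases x <;> rfl
  simp [S, List.sum_neg, τ_μ, Function.comp_def]

theorem range_sum_rs_eq_image_S (n : ℕ) :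
    (Set.range fun i : ℕ => ∑ j ∈ Finset.range n, rs (i + j)) =
      S '' {W | FactorOf W ∧ W.length = n} := by
  have sum_rs (i : ℕ) :
      ∑ j ∈ Finset.range n, rs (i + j) = S ((List.range n).map fun j => fp (i + j)) := by
    rw [S, List.map_map]
    rfl
  ext x
  constructor
  · rintro ⟨i, rfl⟩
    exact ⟨_, ⟨⟨i, by simp⟩, by simp⟩, (sum_rs i).symm⟩
  · rintro ⟨W, ⟨⟨i, hi⟩, rfl⟩, rfl⟩
    exact ⟨i, (sum_rs i).trans (congrArg S hi.symm)⟩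

theorem neg_range_sum_rs (n : ℕ) :
    -(Set.range fun i : ℕ => ∑ j ∈ Finset.range n, rs (i + j)) =
      Set.range fun i : ℕ => ∑ j ∈ Finset.range n, rs (i + j) := by
  rw [range_sum_rs_eq_image_S]
  have neg_mem {x : ℤ} (hx : x ∈ S '' {W | FactorOf W ∧ W.length = n}) :
      -x ∈ S '' {W | FactorOf W ∧ W.length = n} := by
    obtain ⟨W, ⟨hW, hlen⟩, rfl⟩ := hx
    exact ⟨W.map μ, ⟨hW.map_μ, by rwa [List.length_map]⟩, S_map_μ W⟩
  exact Set.ext fun x => ⟨fun hx => neg_neg x ▸ neg_mem hx, neg_mem⟩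

theorem factor_mu_and_max_min_general {n : ℕ} {M m : ℤ}
    (hM : IsGreatest (Set.range fun i : ℕ => ∑ j ∈ Finset.range n, rs (i + j)) M)
    (hm : IsLeast (Set.range fun i : ℕ => ∑ j ∈ Finset.range n, rs (i + j)) m)
    (W : List Letter) :
    (FactorOf W ↔ FactorOf (W.map μ)) ∧ (S W = M ↔ S (W.map μ) = m) := by
  have m_eq_neg_M : m = -M := hm.isGLB.unique (neg_range_sum_rs n ▸ hM.isLUB.neg)
  exact ⟨factorOf_map_μ_iff.symm, by rw [S_map_μ, m_eq_neg_M, neg_inj]⟩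

/-- For the coding `μ`, every `n ≥ 1` and every word `W`
of length `n` over `{a, b, c, d}`: `W` is a factor of `s` iff `μ(W)` is a
factor of `s`; and if `W` is a factor of `s`, then `S(W) = M_r(n)` iff
`S(μ(W)) = m_r(n)`. -/
theorem factor_mu_and_max_min
    (M m : ℕ → ℤ)
    (hM : ∀ n, IsGreatest (Set.range fun i : ℕ => ∑ j ∈ Finset.range n, rs (i + j)) (M n))
    (hm : ∀ n, IsLeast (Set.range fun i : ℕ => ∑ j ∈ Finset.range n, rs (i + j)) (m n))
    (n : ℕ) (hn : 1 ≤ n) (W : List Letter) (hW : W.length = n) :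
    (FactorOf W ↔ FactorOf (W.map μ)) ∧
    (FactorOf W → (S W = M n ↔ S (W.map μ) = m n)) := by
  obtain ⟨factor_iff, max_iff_min⟩ := factor_mu_and_max_min_general (hM n) (hm n) W
  exact ⟨factor_iff, fun _ => max_iff_min⟩
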